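/- The sum ∑_{n=1}^∞ H_n / ((2n+1) C(2n,n)) equals -(π/(3√3)) log 3 - (2/√3) δ₁, where δ₁ is the real number given by δ₁ = i ∑_{n=1}^∞ [((√3 + i)/(2√3))^n - ((√3 - i)/(2√3))^n] / n². -/

import Mathlib

noncomputable def myLi (z : ℂ) : ℂ := ∑' n : ℕ, z ^ (n + 1) / ((n : ℂ) + 1) ^ 2

lemma myLi_summable {z : ℂ} (hz : ‖z‖ < 1) :
    Summable (fun n : ℕ => z ^ (n + 1) / ((n : ℂ) + 1) ^ 2) := by
  refine Summable.of_norm_bounded (g := fun n : ℕ => ‖z‖ ^ n)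
    (summable_geometric_of_lt_one (norm_nonneg _) hz) ?_
  intro n
  have h1 : ‖(n : ℂ) + 1‖ = (n : ℝ) + 1 := by
    have := Complex.norm_natCast (n + 1)
    push_cast at this; exact this
  rw [norm_div, norm_pow, norm_pow, h1]
  rw [div_le_iff₀ (by positivity), pow_succ]
  have : (1 : ℝ) ≤ ((n : ℝ) + 1) ^ 2 := by nlinarith [Nat.cast_nonneg (α := ℝ) n]
  have h0 : 0 ≤ ‖z‖ ^ n := by positivity
  nlinarith [mul_le_mul_of_nonneg_left hz.le h0, mul_le_mul_of_nonneg_left this h0]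

lemma myLi_hasDerivAt {z : ℂ} (hz : ‖z‖ < 1) (hz0 : z ≠ 0) :
    HasDerivAt myLi (-Complex.log (1 - z) / z) z := by
  obtain ⟨r, hr1, hr2⟩ := exists_between hz
  have hr0 : 0 ≤ r := (norm_nonneg z).trans hr1.le
  have key := hasDerivAt_tsum_of_isPreconnected (𝕜 := ℂ) (F := ℂ)
    (g := fun (n : ℕ) (z : ℂ) => z ^ (n + 1) / ((n : ℂ) + 1) ^ 2)
    (g' := fun (n : ℕ) (z : ℂ) => z ^ n / ((n : ℂ) + 1))
    (u := fun n : ℕ => r ^ n) (t := Metric.ball 0 r) (y₀ := z) (y := z)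
    (summable_geometric_of_lt_one hr0 hr2) Metric.isOpen_ball
    (convex_ball _ _).isPreconnected ?_ ?_ (by simpa using hr1) (myLi_summable hz) (by simpa using hr1)
  · have h2 := (Complex.hasSum_taylorSeries_neg_log' hz).div_const z
    have h3 : ∑' n : ℕ, z ^ n / ((n : ℂ) + 1) = -Complex.log (1 - z) / z := by
      rw [← h2.tsum_eq]
      refine tsum_congr fun n => ?_
      field_simp
      ring
    rw [h3] at key
    exact key
  · intro n y hy
    have hn : ((n : ℂ) + 1) ≠ 0 := Nat.cast_add_one_ne_zero n
    convert! (hasDerivAt_pow (n + 1) y).div_const (((n : ℂ) + 1) ^ 2) using 1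
    push_cast
    field_simp
  · intro n y hy
    have h1 : ‖(n : ℂ) + 1‖ = (n : ℝ) + 1 := by
      have := Complex.norm_natCast (n + 1)
      push_cast at this; exact this
    have hy' : ‖y‖ < r := by simpa using hy
    rw [norm_div, norm_pow, h1, div_le_iff₀ (by positivity)]
    have h4 : ‖y‖ ^ n ≤ r ^ n := pow_le_pow_left₀ (norm_nonneg _) hy'.le n
    have : 0 ≤ r ^ n * n := by positivity
    nlinarith

lemma harm_le (n : ℕ) : (harmonic n : ℝ) ≤ n := by
  induction n with
  | zero => simp
  | succ k ih =>
    rw [harmonic_succ]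
    push_cast
    have : ((k : ℝ) + 1)⁻¹ ≤ 1 := inv_le_one_of_one_le₀ (by linarith [Nat.cast_nonneg (α := ℝ) k])
    linarith

lemma harm_nonneg (n : ℕ) : (0 : ℝ) ≤ (harmonic n : ℝ) := by
  have : (0 : ℚ) ≤ harmonic n := by unfold harmonic; positivity
  exact_mod_cast this

lemma harm_summable {x : ℝ} (h0 : 0 ≤ x) (h1 : x < 1) :
    Summable (fun n : ℕ => (harmonic n : ℝ) * x ^ n) := by
  have hs : Summable (fun n : ℕ => (n : ℝ) * x ^ n) := by
    simpa using summable_pow_mul_geometric_of_norm_lt_one 1 (r := x)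
      (by rw [Real.norm_eq_abs, abs_of_nonneg h0]; exact h1)
  refine Summable.of_nonneg_of_le (fun n => mul_nonneg (harm_nonneg n) (by positivity)) ?_ hs
  intro n
  exact mul_le_mul_of_nonneg_right (harm_le n) (by positivity)

lemma harm_hasSum {x : ℝ} (h0 : 0 ≤ x) (h1 : x < 1) :
    HasSum (fun n : ℕ => (harmonic n : ℝ) * x ^ n) (-Real.log (1 - x) / (1 - x)) := by
  have hs := harm_summable h0 h1
  have ha := hs.hasSum
  set S := ∑' n : ℕ, (harmonic n : ℝ) * x ^ n with hS
  have hb : HasSum (fun n : ℕ => (harmonic (n + 1) : ℝ) * x ^ (n + 1)) S := by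
    have := (hasSum_nat_add_iff' (f := fun n : ℕ => (harmonic n : ℝ) * x ^ n) 1).2 ha
    simpa using this
  have hc := hb.sub (ha.mul_left x)
  have hd := Real.hasSum_pow_div_log_of_abs_lt_one (x := x) (by rwa [abs_of_nonneg h0])
  have he : S - x * S = -Real.log (1 - x) := by
    refine hc.unique ?_
    convert! hd using 2 with n
    rw [harmonic_succ]
    push_cast
    ring
  convert! ha using 1
  rw [← he]
  have : 1 - x ≠ 0 := by linarith
  field_simp

lemma beta_int (n : ℕ) : ∫ t in (0:ℝ)..1, (t * (1 - t)) ^ n =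
    1 / ((2 * n + 1) * (Nat.choose (2 * n) n : ℝ)) := by
  have h := Complex.Gamma_mul_Gamma_eq_betaIntegral (s := n + 1) (t := n + 1)
    (by simp; positivity) (by simp; positivity)
  rw [Complex.Gamma_nat_eq_factorial, show (n + 1 + (n + 1) : ℂ) = ((2 * n + 1 : ℕ) : ℂ) + 1 by
    push_cast; ring, Complex.Gamma_nat_eq_factorial] at h
  have h2 : Complex.betaIntegral (n + 1) (n + 1) =
      ((∫ t in (0:ℝ)..1, (t * (1 - t)) ^ n : ℝ) : ℂ) := by
    rw [Complex.betaIntegral, ← intervalIntegral.integral_ofReal]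
    refine intervalIntegral.integral_congr fun t _ => ?_
    simp [mul_pow]
  rw [h2] at h
  have h3 : (n.factorial : ℝ) * n.factorial = (2 * n + 1).factorial *
      ∫ t in (0:ℝ)..1, (t * (1 - t)) ^ n := by exact_mod_cast h
  have h4 : (Nat.choose (2 * n) n : ℝ) * n.factorial * n.factorial = (2 * n).factorial := by
    have := Nat.choose_mul_factorial_mul_factorial (n := 2 * n) (k := n) (by omega)
    rw [show 2 * n - n = n by omega] at this
    exact_mod_cast this
  rw [Nat.factorial_succ] at h3
  push_cast at h3
  rw [← h4] at h3
  have hf : (n.factorial : ℝ) ≠ 0 := by positivity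
  have hch : (Nat.choose (2 * n) n : ℝ) ≠ 0 := by
    have := Nat.choose_pos (n := 2 * n) (k := n) (by omega)
    positivity
  have hn : (2 * (n : ℝ) + 1) ≠ 0 := by positivity
  rw [eq_div_iff (by positivity)]
  have : (n.factorial : ℝ) * n.factorial ≠ 0 := by positivity
  apply mul_left_cancel₀ this
  linear_combination -h3

lemma sum_eq_integral :
    ∑' n : ℕ, (harmonic n : ℝ) / ((2 * n + 1) * (Nat.choose (2 * n) n)) =
    ∫ t in (0:ℝ)..1, -Real.log (1 - t * (1 - t)) / (1 - t * (1 - t)) := by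
  have hb : ∀ t ∈ Set.uIoc (0:ℝ) 1, 0 ≤ t * (1 - t) ∧ t * (1 - t) ≤ 1 / 4 := by
    intro t ht
    rw [Set.uIoc_of_le zero_le_one] at ht
    exact ⟨mul_nonneg ht.1.le (by linarith [ht.2]), by nlinarith [sq_nonneg (t - 1 / 2)]⟩
  have hsm := harm_summable (x := 1 / 4) (by norm_num) (by norm_num)
  have h := intervalIntegral.hasSum_integral_of_dominated_convergence
    (μ := MeasureTheory.volume) (a := 0) (b := 1)
    (F := fun (n : ℕ) (t : ℝ) => (harmonic n : ℝ) * (t * (1 - t)) ^ n)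
    (f := fun t => -Real.log (1 - t * (1 - t)) / (1 - t * (1 - t)))
    (fun n _ => (harmonic n : ℝ) * (1 / 4) ^ n)
    (fun n => Continuous.aestronglyMeasurable (by fun_prop))
    (fun n => Filter.Eventually.of_forall fun t ht => by
      have := hb t ht
      rw [norm_mul, norm_pow, Real.norm_eq_abs, Real.norm_eq_abs, abs_of_nonneg this.1,
        abs_of_nonneg (harm_nonneg n)]
      exact mul_le_mul_of_nonneg_left (pow_le_pow_left₀ this.1 this.2 n) (harm_nonneg n))
    (Filter.Eventually.of_forall fun t ht => hsm)
    intervalIntegrable_const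
    (Filter.Eventually.of_forall fun t ht => harm_hasSum (hb t ht).1 (by linarith [(hb t ht).2]))
  rw [← h.tsum_eq]
  refine tsum_congr fun n => ?_
  rw [intervalIntegral.integral_const_mul, beta_int]
  ring

/-- Antiderivative in the complex variable. -/
noncomputable def myPhi (z : ℂ) : ℂ :=
  (Complex.log z ^ 2 - Complex.log (1 - z) ^ 2) / 2 - myLi z + myLi (1 - z)
    + Complex.log 3 * (Complex.log z - Complex.log (1 - z))

lemma myPhi_hasDerivAt {z : ℂ} (h : ‖z‖ < 1) (h' : ‖1 - z‖ < 1)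
    (hs : z ∈ Complex.slitPlane) (hs' : 1 - z ∈ Complex.slitPlane) :
    HasDerivAt myPhi ((Complex.log z + Complex.log (1 - z) + Complex.log 3) / (z * (1 - z))) z := by
  have hz : z ≠ 0 := Complex.slitPlane_ne_zero hs
  have hz' : 1 - z ≠ 0 := Complex.slitPlane_ne_zero hs'
  have hsub : HasDerivAt (fun z : ℂ => 1 - z) (-1) z := by
    simpa using (hasDerivAt_id z).const_sub 1
  have hA := Complex.hasDerivAt_log hs
  have hB : HasDerivAt (fun z : ℂ => Complex.log (1 - z)) ((1 - z)⁻¹ * (-1)) z :=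
    (Complex.hasDerivAt_log hs').comp z hsub
  have hL := myLi_hasDerivAt h hz
  have hL' : HasDerivAt (fun z : ℂ => myLi (1 - z)) (-Complex.log (1 - (1 - z)) / (1 - z) * (-1)) z :=
    (myLi_hasDerivAt h' hz').comp z hsub
  have := (((((hA.pow 2).sub (hB.pow 2)).div_const 2).sub hL).add hL').add
    ((hA.sub hB).const_mul (Complex.log 3))
  convert! this using 1
  simp only [sub_sub_cancel]
  field_simp
  push_cast
  ring

noncomputable def myZ (t : ℝ) : ℂ := ⟨1 / 2, (2 * t - 1) / (2 * Real.sqrt 3)⟩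

lemma myZ_conj (t : ℝ) : 1 - myZ t = (starRingEnd ℂ) (myZ t) := by
  apply Complex.ext <;> simp [myZ]; norm_num

lemma myZ_normSq (t : ℝ) : ‖myZ t‖ ^ 2 = (1 - t * (1 - t)) / 3 := by
  rw [Complex.sq_norm, Complex.normSq_apply]
  simp only [myZ]
  have : Real.sqrt 3 ^ 2 = 3 := Real.sq_sqrt (by norm_num)
  have h0 : Real.sqrt 3 ≠ 0 := by positivity
  field_simp
  rw [this]; ring

lemma myZ_deriv (t : ℝ) : HasDerivAt myZ (Complex.I / (Real.sqrt 3 : ℂ)) t := by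
  have h0 : (Real.sqrt 3 : ℂ) ≠ 0 := by
    exact_mod_cast (by positivity : Real.sqrt 3 ≠ 0)
  have e : myZ = fun t : ℝ => (1 / 2 : ℂ) + Complex.I * (2 * (t : ℂ) - 1) / (2 * (Real.sqrt 3 : ℂ)) := by
    funext t
    rw [← Complex.re_add_im (myZ t)]
    simp only [myZ]
    push_cast
    ring
  rw [e]
  have h1 : HasDerivAt (fun t : ℝ => (t : ℂ)) 1 t := Complex.ofRealCLM.hasDerivAt
  have h2 := (((((h1.const_mul 2).sub_const 1).const_mul Complex.I).div_const
    (2 * (Real.sqrt 3 : ℂ))).const_add (1 / 2 : ℂ))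
  convert! h2 using 1
  field_simp

lemma log_one : Complex.log (myZ 1) = ((-(Real.log 3) / 2 : ℝ) : ℂ) + (Real.pi / 6 : ℝ) * Complex.I := by
  have h0 : Real.sqrt 3 ≠ 0 := by positivity
  have hz : myZ 1 = Complex.exp (((-(Real.log 3) / 2 : ℝ) : ℂ) + (Real.pi / 6 : ℝ) * Complex.I) := by
    rw [Complex.exp_add_mul_I, ← Complex.ofReal_exp, ← Complex.ofReal_cos, ← Complex.ofReal_sin,
      Real.cos_pi_div_six, Real.sin_pi_div_six]
    have : Real.exp (-(Real.log 3) / 2) = 1 / Real.sqrt 3 := by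
      rw [neg_div, Real.exp_neg, Real.exp_half, Real.exp_log (by norm_num), one_div]
    rw [this]
    apply Complex.ext
    · simp [myZ]; field_simp; exact (Real.sq_sqrt (by norm_num)).symm
    · simp [myZ]; field_simp; norm_num
  rw [hz, Complex.log_exp]
  · rw [Complex.add_im, Complex.ofReal_im, Complex.im_ofReal_mul, Complex.I_im]
    linarith [Real.pi_pos]
  · rw [Complex.add_im, Complex.ofReal_im, Complex.im_ofReal_mul, Complex.I_im]
    linarith [Real.pi_pos]

lemma myZ_arg (t : ℝ) : (myZ t).arg ≠ Real.pi := by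
  intro h
  have := (Complex.arg_eq_pi_iff.1 h).1
  norm_num [myZ] at this

lemma integral_eval :
    ((∫ t in (0:ℝ)..1, -Real.log (1 - t * (1 - t)) / (1 - t * (1 - t)) : ℝ) : ℂ) =
    (Real.sqrt 3 / 3 * Complex.I) * (myPhi (myZ 1) - myPhi (myZ 0)) := by
  have h3 : (Real.sqrt 3 : ℂ) ^ 2 = 3 := by
    exact_mod_cast Real.sq_sqrt (by norm_num : (0:ℝ) ≤ 3)
  have h0 : (Real.sqrt 3 : ℂ) ≠ 0 := by
    exact_mod_cast (by positivity : Real.sqrt 3 ≠ 0)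
  have hQ : ∀ t : ℝ, 0 < 1 - t * (1 - t) := fun t => by nlinarith [sq_nonneg (t - 1 / 2)]
  rw [← intervalIntegral.integral_ofReal, mul_sub]
  refine intervalIntegral.integral_eq_sub_of_hasDerivAt
    (f := fun t => (Real.sqrt 3 / 3 * Complex.I) * myPhi (myZ t)) ?_ ?_
  · intro t ht
    rw [Set.uIcc_of_le zero_le_one] at ht
    have hn := myZ_normSq t
    have hlt : ‖myZ t‖ < 1 := by
      have : ‖myZ t‖ ^ 2 < 1 := by rw [hn]; nlinarith [ht.1, ht.2]
      nlinarith [norm_nonneg (myZ t)]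
    have hc := myZ_conj t
    have hs : myZ t ∈ Complex.slitPlane := Or.inl (by norm_num [myZ])
    have hs' : 1 - myZ t ∈ Complex.slitPlane := Or.inl (by norm_num [myZ])
    have hd := (myPhi_hasDerivAt hlt (by rw [hc, Complex.norm_conj]; exact hlt) hs hs').scomp t
      (myZ_deriv t)
    have hd2 := hd.const_mul (Real.sqrt 3 / 3 * Complex.I)
    convert! hd2 using 1
    have hpos : 0 < ‖myZ t‖ := norm_pos_iff.2 (Complex.slitPlane_ne_zero hs)
    have hlog : Complex.log (myZ t) + Complex.log (1 - myZ t) + Complex.log 3 =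
        (Real.log (1 - t * (1 - t)) : ℂ) := by
      rw [hc, Complex.log_conj _ (myZ_arg t), Complex.add_conj, Complex.log_re]
      have : (3 : ℂ) = ((3 : ℝ) : ℂ) := by norm_num
      rw [this, ← Complex.ofReal_log (by norm_num), ← Complex.ofReal_add]
      congr 1
      have h5 : 1 - t * (1 - t) = ‖myZ t‖ ^ 2 * 3 := by rw [hn]; ring
      rw [h5, Real.log_mul (by positivity) (by norm_num), Real.log_pow]
      push_cast; ring
    have hmul : myZ t * (1 - myZ t) = ((1 - t * (1 - t) : ℝ) : ℂ) / 3 := by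
      rw [hc, Complex.mul_conj, Complex.normSq_eq_norm_sq, hn]
      push_cast; ring
    rw [hlog, hmul, smul_eq_mul]
    have hq : ((1 - t * (1 - t) : ℝ) : ℂ) ≠ 0 := by exact_mod_cast (hQ t).ne'
    rw [Complex.ofReal_div, Complex.ofReal_neg]
    field_simp
    rw [Complex.I_sq]
    ring
  · apply Continuous.intervalIntegrable
    refine Complex.continuous_ofReal.comp ?_
    refine Continuous.div ?_ (by fun_prop) (fun t => (hQ t).ne')
    exact (Continuous.log (by fun_prop) (fun t => (hQ t).ne')).neg

theorem stmt_11 (δ₁ : ℝ)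
    (hδ : (δ₁ : ℂ) = Complex.I * ∑' n : ℕ,
        ((((Real.sqrt 3 : ℂ) + Complex.I) / (2 * (Real.sqrt 3 : ℂ))) ^ (n + 1) -
          (((Real.sqrt 3 : ℂ) - Complex.I) / (2 * (Real.sqrt 3 : ℂ))) ^ (n + 1)) /
        ((n : ℂ) + 1) ^ 2) :
    ∑' n : ℕ, (harmonic n : ℝ) / ((2 * n + 1) * (Nat.choose (2 * n) n)) =
      -(Real.pi / (3 * Real.sqrt 3)) * Real.log 3 - (2 / Real.sqrt 3) * δ₁ := by
  rw [sum_eq_integral]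
  apply Complex.ofReal_injective
  rw [integral_eval]
  have h3 : (Real.sqrt 3 : ℂ) ^ 2 = 3 := by
    exact_mod_cast Real.sq_sqrt (by norm_num : (0:ℝ) ≤ 3)
  have h0 : (Real.sqrt 3 : ℂ) ≠ 0 := by
    exact_mod_cast (by positivity : Real.sqrt 3 ≠ 0)
  have e1 : ((Real.sqrt 3 : ℂ) + Complex.I) / (2 * (Real.sqrt 3 : ℂ)) = myZ 1 := by
    rw [← Complex.re_add_im (myZ 1)]
    simp only [myZ]
    push_cast
    field_simp
    ring
  have e0 : ((Real.sqrt 3 : ℂ) - Complex.I) / (2 * (Real.sqrt 3 : ℂ)) = myZ 0 := by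
    rw [← Complex.re_add_im (myZ 0)]
    simp only [myZ]
    push_cast
    field_simp
    ring
  have c1 : 1 - myZ 1 = myZ 0 := by rw [← e1, ← e0]; field_simp; ring
  have c0 : 1 - myZ 0 = myZ 1 := by rw [← c1]; ring
  have n1 : ‖myZ 1‖ < 1 := by
    have := myZ_normSq 1
    nlinarith [norm_nonneg (myZ 1)]
  have n0 : ‖myZ 0‖ < 1 := by
    have := myZ_normSq 0
    nlinarith [norm_nonneg (myZ 0)]
  have hL : (δ₁ : ℂ) = Complex.I * (myLi (myZ 1) - myLi (myZ 0)) := by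
    rw [hδ, e1, e0, myLi, myLi, ← (myLi_summable n1).tsum_sub (myLi_summable n0)]
    congr 1
    refine tsum_congr fun n => ?_
    ring
  have l0 : Complex.log (myZ 0) = ((-(Real.log 3) / 2 : ℝ) : ℂ) - (Real.pi / 6 : ℝ) * Complex.I := by
    rw [← c1, myZ_conj, Complex.log_conj _ (myZ_arg 1), log_one, map_add, map_mul,
      Complex.conj_ofReal, Complex.conj_ofReal, Complex.conj_I]
    ring
  have l3 : Complex.log 3 = (Real.log 3 : ℂ) := by
    rw [Complex.ofReal_log (by norm_num)]; norm_num
  rw [myPhi, myPhi, c1, c0, log_one, l0, l3]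
  push_cast
  rw [hL]
  field_simp
  rw [h3]
  ring_nf
  simp only [Complex.I_sq]
  ring
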